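/- Let (λ_k, z_k, z̃_k, ε_k) be NE-HPE sequences for T with parameter σ, distance generating function w ∈ 𝒟_Z(m,M), and initial point z₀ ∈ Z. Assume σ < 1, Σ_{k=1}^{∞} λ_k² = ∞, and that the sequence {z̃_k} is bounded. Then there exists z̃ with 0 ∈ T(z̃) and z̃ ∈ Z such that (dw)_{z_k}(z̃) → 0 and (dw)_{z̃_k}(z̃) → 0 as k → ∞. -/

import Mathlib

open RealInnerProductSpace Filter

/-- The dual (extended) seminorm of a seminorm `p`:
`‖v‖_* = sup { ⟪v, z⟫ : p z ≤ 1 }`, valued in `[-∞, ∞]`. -/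
noncomputable def dualSN {E : Type*} [NormedAddCommGroup E] [InnerProductSpace ℝ E]
    (p : E → ℝ) (v : E) : EReal :=
  ⨆ z : {z : E // p z ≤ 1}, ((⟪v, z.1⟫ : ℝ) : EReal)

/-- The Bregman distance `(dw)_z(z') := w(z') - w(z) - ⟪∇w(z), z' - z⟫`
associated with `w`, whose gradient is `gw`. -/
noncomputable def breg {E : Type*} [NormedAddCommGroup E] [InnerProductSpace ℝ E]
    (w : E → ℝ) (gw : E → E) (z z' : E) : ℝ :=
  w z' - w z - ⟪gw z, z' - z⟫

/-- `w ∈ 𝒟_Z(m, M)`: `w` is differentiable on `Z` with gradient `gw`, is `m`-strongly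
convex with respect to the seminorm `p` on `Z`, and `gw` is `M`-Lipschitz from `p` to the
dual seminorm of `p` on `Z`. -/
structure IsDGF {E : Type*} [NormedAddCommGroup E] [InnerProductSpace ℝ E]
    [FiniteDimensional ℝ E]
    (Z : Set E) (p : Seminorm ℝ E) (m M : ℝ) (w : E → ℝ) (gw : E → E) : Prop where
  diff : ∀ z ∈ Z, HasGradientAt w (gw z) z
  strconv : ∀ z ∈ Z, ∀ z' ∈ Z, m / 2 * (p (z - z'))^2 ≤ w z' - w z - ⟪gw z, z' - z⟫
  lips : ∀ z ∈ Z, ∀ z' ∈ Z, dualSN ⇑p (gw z - gw z') ≤ ((M * p (z - z') : ℝ) : EReal)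

/-- A set-valued operator `T : E ⇉ E` is monotone. -/
def MonoOp {E : Type*} [NormedAddCommGroup E] [InnerProductSpace ℝ E]
    (T : E → Set E) : Prop :=
  ∀ z z' t t' : E, t ∈ T z → t' ∈ T z' → 0 ≤ ⟪z - z', t - t'⟫

/-- A set-valued operator `T : E ⇉ E` is maximal monotone. -/
def MaxMonoOp {E : Type*} [NormedAddCommGroup E] [InnerProductSpace ℝ E]
    (T : E → Set E) : Prop :=
  MonoOp T ∧ ∀ T' : E → Set E, MonoOp T' → (∀ z, T z ⊆ T' z) → T' = T

/-- The ε-enlargement `T^[ε]` of a monotone operator `T`. -/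
def epsEnl {E : Type*} [NormedAddCommGroup E] [InnerProductSpace ℝ E]
    (T : E → Set E) (ε : ℝ) (z : E) : Set E :=
  {t | ∀ z' t' : E, t' ∈ T z' → -ε ≤ ⟪t - t', z - z'⟫}

/-- NE-HPE sequences `(λ_k, z_k, z̃_k, ε_k)` for `T`, with parameter `σ`, distance
generating function `w` (with gradient `gw`) and initial point `z_0 = zs 0 ∈ Z`. -/
structure NEHPE {E : Type*} [NormedAddCommGroup E] [InnerProductSpace ℝ E]
    (Z : Set E) (w : E → ℝ) (gw : E → E) (T : E → Set E) (σ : ℝ)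
    (lam : ℕ → ℝ) (zs : ℕ → E) (zt : ℕ → E) (ε : ℕ → ℝ) : Prop where
  lam_pos : ∀ k, 1 ≤ k → 0 < lam k
  zs_mem : ∀ k, zs k ∈ Z
  zt_mem : ∀ k, 1 ≤ k → zt k ∈ Z
  eps_nonneg : ∀ k, 1 ≤ k → 0 ≤ ε k
  incl : ∀ k, 1 ≤ k → (1 / lam k) • (gw (zs (k-1)) - gw (zs k)) ∈ epsEnl T (ε k) (zt k)
  err : ∀ k, 1 ≤ k →
    breg w gw (zs k) (zt k) + lam k * ε k ≤ σ * breg w gw (zs (k-1)) (zt k)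

/-! For a solution `x` of `0 ∈ T x`, the three-point identity for the Bregman distance turns the
error criterion into the descent inequality
`(1 - σ) (dw)_{z_{k-1}}(z̃_k) + (dw)_{z_k}(x) ≤ (dw)_{z_{k-1}}(x)`. Hence `(dw)_{z_k}(x)` is
nonincreasing and `∑ (dw)_{z_{k-1}}(z̃_k) < ∞`. On `Z` the Bregman distance is comparable to the
square of the seminorm, so `λ_k² (‖r_k‖² + ε_k²) = ‖∇w(z_{k-1}) - ∇w(z_k)‖² + (λ_k ε_k)²` is
summable. As `∑ λ_k² = ∞`, both `r_k` and `ε_k` tend to `0` along a subsequence, and maximality of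
`T` makes every cluster point `x` of `z̃_k` along it a solution. Since `(dw)_{z_k}(x)` tends to `0`
along a further subsequence and is nonincreasing, it tends to `0`. -/

theorem summable_sq_of_summable {ι : Type*} {f : ι → ℝ} (hf : Summable f) :
    Summable fun i => f i ^ 2 := by
  refine .of_norm_bounded_eventually hf.norm ?_
  filter_upwards [hf.norm.tendsto_cofinite_zero.eventually_le_const one_pos] with i hi
  rw [norm_pow]
  exact pow_le_of_le_one (norm_nonneg _) hi two_ne_zero

theorem not_summable_succ_of_tendsto_sum_Icc_atTop {f : ℕ → ℝ}
    (hf : Tendsto (fun n => ∑ k ∈ Finset.Icc 1 n, f k) atTop atTop) :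
    ¬ Summable fun k => f (k + 1) := fun hsum => by
  refine not_tendsto_nhds_of_tendsto_atTop hf _ (hsum.hasSum.tendsto_sum_nat.congr fun n => ?_)
  rw [Finset.range_eq_Ico, Finset.sum_Ico_add' f 0 n 1]
  rfl

theorem exists_strictMono_tendsto_zero_of_summable_mul {a b : ℕ → ℝ} (ha : ∀ k, 0 ≤ a k)
    (hb : ∀ k, 0 ≤ b k) (hab : Summable fun k => a k * b k) (hna : ¬ Summable a) :
    ∃ φ : ℕ → ℕ, StrictMono φ ∧ Tendsto (fun n => b (φ n)) atTop (nhds 0) := by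
  have hfreq (n : ℕ) : ∃ᶠ k in atTop, b k < 1 / ((n : ℝ) + 1) := fun hlarge => by
    refine hna (.of_norm_bounded_eventually_nat (hab.mul_right ((n : ℝ) + 1)) ?_)
    filter_upwards [hlarge] with k hk
    rw [not_lt, div_le_iff₀ (by positivity)] at hk
    rw [Real.norm_of_nonneg (ha k), mul_assoc]
    exact le_mul_of_one_le_right (ha k) hk
  obtain ⟨φ, hφ, hlt⟩ := extraction_forall_of_frequently hfreq
  exact ⟨φ, hφ, squeeze_zero (fun n => hb _) (fun n => (hlt n).le)
    tendsto_one_div_add_atTop_nhds_zero_nat⟩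

theorem tendsto_seminorm_sub_trans {ι F G : Type*} [AddGroup G] [FunLike F G ℝ]
    [AddGroupSeminormClass F G ℝ] {p : F} {l : Filter ι} {a b c : ι → G}
    (hab : Tendsto (fun i => p (a i - b i)) l (nhds 0))
    (hbc : Tendsto (fun i => p (b i - c i)) l (nhds 0)) :
    Tendsto (fun i => p (a i - c i)) l (nhds 0) :=
  squeeze_zero (fun _ => apply_nonneg p _) (fun i => le_map_sub_add_map_sub p (a i) (b i) (c i))
    (by simpa only [add_zero] using hab.add hbc)

section InnerProductSpace

variable {E : Type*} [NormedAddCommGroup E] [InnerProductSpace ℝ E]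

theorem inner_le_of_dualSN_le {p : E → ℝ} {v x : E} {A : ℝ} (h : dualSN p v ≤ (A : EReal))
    (hx : p x ≤ 1) : ⟪v, x⟫ ≤ A := by
  have hle : ((⟪v, x⟫ : ℝ) : EReal) ≤ dualSN p v :=
    le_iSup (fun z : {z : E // p z ≤ 1} => ((⟪v, z.1⟫ : ℝ) : EReal)) ⟨x, hx⟩
  exact_mod_cast hle.trans h

theorem inner_le_mul_of_dualSN_le {p : Seminorm ℝ E} {v : E} {A : ℝ}
    (h : dualSN p v ≤ (A : EReal)) (x : E) : ⟪v, x⟫ ≤ A * p x := by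
  -- `p x` may vanish, so rescale by `c > p x` and let `c` decrease to `p x`.
  have hscale : ∀ c, p x < c → ⟪v, x⟫ ≤ A * c := fun c hc => by
    have hc0 : 0 < c := (apply_nonneg p x).trans_lt hc
    have hunit : p (c⁻¹ • x) ≤ 1 := by
      rw [map_smul_eq_mul, Real.norm_of_nonneg (inv_nonneg.2 hc0.le), inv_mul_le_one₀ hc0]
      exact hc.le
    have hle := inner_le_of_dualSN_le h hunit
    rwa [inner_smul_right, inv_mul_le_iff₀ hc0, mul_comm] at hle
  have hlim : Tendsto (fun c => A * c) (nhdsWithin (p x) (Set.Ioi (p x))) (nhds (A * p x)) :=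
    (continuous_const_mul A).continuousWithinAt
  exact ge_of_tendsto hlim (eventually_mem_nhdsWithin.mono hscale)

theorem norm_le_of_dualSN_le {p : Seminorm ℝ E} {v : E} {A C : ℝ} (hC : 0 ≤ C)
    (hpC : ∀ x, p x ≤ C * ‖x‖) (h : dualSN p v ≤ (A : EReal)) : ‖v‖ ≤ A * C := by
  have hA : 0 ≤ A := by simpa using inner_le_of_dualSN_le h (x := 0) (by simp)
  rcases (norm_nonneg v).eq_or_lt with hv | hv
  · rw [← hv]
    exact mul_nonneg hA hC
  · refine le_of_mul_le_mul_right ?_ hv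
    calc ‖v‖ * ‖v‖ = ⟪v, v⟫ := (real_inner_self_eq_norm_mul_norm v).symm
      _ ≤ A * p v := inner_le_mul_of_dualSN_le h v
      _ ≤ A * (C * ‖v‖) := mul_le_mul_of_nonneg_left (hpC v) hA
      _ = A * C * ‖v‖ := (mul_assoc _ _ _).symm

theorem breg_sub_breg (w : E → ℝ) (gw : E → E) (u v x y : E) :
    breg w gw u x - breg w gw v x =
      breg w gw u y - breg w gw v y + ⟪gw u - gw v, y - x⟫ := by
  simp only [breg, inner_sub_left, inner_sub_right]
  ring

theorem breg_add_breg_swap (w : E → ℝ) (gw : E → E) (u v : E) :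
    breg w gw u v + breg w gw v u = ⟪gw u - gw v, u - v⟫ := by
  simp only [breg, inner_sub_left, inner_sub_right]
  ring

theorem mem_epsEnl_of_tendsto {ι : Type*} {l : Filter ι} [l.NeBot] {T : E → Set E}
    {δ : ι → ℝ} {z t : ι → E} {δ₀ : ℝ} {z₀ t₀ : E} (hδ : Tendsto δ l (nhds δ₀))
    (hz : Tendsto z l (nhds z₀)) (ht : Tendsto t l (nhds t₀))
    (hmem : ∀ i, t i ∈ epsEnl T (δ i) (z i)) : t₀ ∈ epsEnl T δ₀ z₀ := fun z' t' ht' =>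
  le_of_tendsto_of_tendsto' hδ.neg ((ht.sub_const t').inner (hz.sub_const z'))
    fun i => hmem i z' t' ht'

theorem MaxMonoOp.epsEnl_zero_subset {T : E → Set E} (hT : MaxMonoOp T) (z : E) :
    epsEnl T 0 z ⊆ T z := fun t ht => by
  have hadd : ∀ z' t', t' ∈ T z' → 0 ≤ ⟪z - z', t - t'⟫ := fun z' t' ht' => by
    simpa only [neg_zero, real_inner_comm] using ht z' t' ht'
  have hext : (fun y => T y ∪ {s | y = z ∧ s = t}) = T := by
    refine hT.2 _ ?_ fun y => Set.subset_union_left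
    rintro y y' s s' (hs | ⟨rfl, rfl⟩) (hs' | ⟨rfl, rfl⟩)
    · exact hT.1 y y' s s' hs hs'
    · rw [← inner_neg_neg, neg_sub, neg_sub]
      exact hadd y s hs
    · exact hadd y' s' hs'
    · simp
  rw [← hext]
  exact Or.inr ⟨rfl, rfl⟩

end InnerProductSpace

namespace IsDGF

variable {E : Type*} [NormedAddCommGroup E] [InnerProductSpace ℝ E] [FiniteDimensional ℝ E]
  {Z : Set E} {p : Seminorm ℝ E} {m M : ℝ} {w : E → ℝ} {gw : E → E}

theorem breg_nonneg (hw : IsDGF Z p m M w gw) (hm : 0 ≤ m) :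
    ∀ z ∈ Z, ∀ z' ∈ Z, 0 ≤ breg w gw z z' := fun z hz z' hz' =>
  le_trans (by positivity) (hw.strconv z hz z' hz')

theorem sq_seminorm_sub_le (hw : IsDGF Z p m M w gw) (hm : 0 < m) {z z' : E} (hz : z ∈ Z)
    (hz' : z' ∈ Z) : p (z - z') ^ 2 ≤ 2 / m * breg w gw z z' := by
  rw [← inv_div, ← div_eq_inv_mul, le_div_iff₀' (half_pos hm)]
  exact hw.strconv z hz z' hz'

theorem breg_le (hw : IsDGF Z p m M w gw) (hm : 0 ≤ m) {z z' : E} (hz : z ∈ Z) (hz' : z' ∈ Z) :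
    breg w gw z z' ≤ M * p (z - z') ^ 2 := by
  calc breg w gw z z' ≤ breg w gw z z' + breg w gw z' z :=
        le_add_of_nonneg_right (hw.breg_nonneg hm z' hz' z hz)
    _ = ⟪gw z - gw z', z - z'⟫ := breg_add_breg_swap w gw z z'
    _ ≤ M * p (z - z') * p (z - z') := inner_le_mul_of_dualSN_le (hw.lips z hz z' hz') _
    _ = M * p (z - z') ^ 2 := by ring

theorem exists_norm_sub_le (hw : IsDGF Z p m M w gw) :
    ∃ K, ∀ z ∈ Z, ∀ z' ∈ Z, ‖gw z - gw z'‖ ≤ K * p (z - z') := by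
  obtain ⟨C, hC, hpC⟩ :=
    Seminorm.bound_of_continuous_normedSpace p p.convexOn.locallyLipschitz.continuous
  refine ⟨M * C, fun z hz z' hz' => ?_⟩
  rw [mul_right_comm]
  exact norm_le_of_dualSN_le hC.le hpC (hw.lips z hz z' hz')

theorem tendsto_breg_zero_iff (hw : IsDGF Z p m M w gw) (hm : 0 < m) {ι : Type*} {l : Filter ι}
    {u v : ι → E} (hu : ∀ i, u i ∈ Z) (hv : ∀ i, v i ∈ Z) :
    Tendsto (fun i => breg w gw (u i) (v i)) l (nhds 0) ↔
      Tendsto (fun i => p (u i - v i)) l (nhds 0) := by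
  constructor
  · intro h
    refine squeeze_zero (fun i => apply_nonneg p _)
      (fun i => Real.le_sqrt_of_sq_le (hw.sq_seminorm_sub_le hm (hu i) (hv i))) ?_
    simpa using (h.const_mul (2 / m)).sqrt
  · intro h
    refine squeeze_zero (fun i => hw.breg_nonneg hm.le _ (hu i) _ (hv i))
      (fun i => hw.breg_le hm.le (hu i) (hv i)) ?_
    simpa using (h.pow 2).const_mul M

theorem summable_sq_seminorm_sub (hw : IsDGF Z p m M w gw) (hm : 0 < m) {ι : Type*}
    {u v : ι → E} (hu : ∀ i, u i ∈ Z) (hv : ∀ i, v i ∈ Z)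
    (hsum : Summable fun i => breg w gw (u i) (v i)) : Summable fun i => p (u i - v i) ^ 2 :=
  .of_nonneg_of_le (fun _ => sq_nonneg _) (fun i => hw.sq_seminorm_sub_le hm (hu i) (hv i))
    (hsum.mul_left (2 / m))

end IsDGF

/-- The residual `r_{k+1} = (∇w(z_k) - ∇w(z_{k+1})) / λ_{k+1}` of an NE-HPE step. The index is
shifted by one, so that residuals are indexed by all of `ℕ`. -/
noncomputable def hpeResidual {E : Type*} [NormedAddCommGroup E] [InnerProductSpace ℝ E]
    (gw : E → E) (lam : ℕ → ℝ) (zs : ℕ → E) (k : ℕ) : E :=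
  (1 / lam (k + 1)) • (gw (zs k) - gw (zs (k + 1)))

namespace NEHPE

section Convex

variable {E : Type*} [NormedAddCommGroup E] [InnerProductSpace ℝ E] {Z : Set E} {w : E → ℝ}
  {gw : E → E} {T : E → Set E} {σ : ℝ} {lam : ℕ → ℝ} {zs zt : ℕ → E} {ε : ℕ → ℝ}

theorem lam_succ_pos (h : NEHPE Z w gw T σ lam zs zt ε) (k : ℕ) : 0 < lam (k + 1) :=
  h.lam_pos _ (Nat.le_add_left 1 k)

theorem zt_succ_mem (h : NEHPE Z w gw T σ lam zs zt ε) (k : ℕ) : zt (k + 1) ∈ Z :=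
  h.zt_mem _ (Nat.le_add_left 1 k)

theorem breg_succ_add_lam_mul_eps_le (h : NEHPE Z w gw T σ lam zs zt ε) (k : ℕ) :
    breg w gw (zs (k + 1)) (zt (k + 1)) + lam (k + 1) * ε (k + 1) ≤
      σ * breg w gw (zs k) (zt (k + 1)) :=
  h.err _ (Nat.le_add_left 1 k)

theorem hpeResidual_mem (h : NEHPE Z w gw T σ lam zs zt ε) (k : ℕ) :
    hpeResidual gw lam zs k ∈ epsEnl T (ε (k + 1)) (zt (k + 1)) :=
  h.incl _ (Nat.le_add_left 1 k)

theorem lam_smul_hpeResidual (h : NEHPE Z w gw T σ lam zs zt ε) (k : ℕ) :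
    lam (k + 1) • hpeResidual gw lam zs k = gw (zs k) - gw (zs (k + 1)) := by
  rw [hpeResidual, smul_smul, mul_one_div_cancel (h.lam_succ_pos k).ne', one_smul]

theorem lam_mul_eps_nonneg (h : NEHPE Z w gw T σ lam zs zt ε) (k : ℕ) :
    0 ≤ lam (k + 1) * ε (k + 1) :=
  mul_nonneg (h.lam_succ_pos k).le (h.eps_nonneg _ (Nat.le_add_left 1 k))

theorem breg_succ_add_le (h : NEHPE Z w gw T σ lam zs zt ε) {x : E} (hx : 0 ∈ T x) (k : ℕ) :
    (1 - σ) * breg w gw (zs k) (zt (k + 1)) + breg w gw (zs (k + 1)) x ≤ breg w gw (zs k) x := by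
  have hmono : -(lam (k + 1) * ε (k + 1)) ≤
      ⟪gw (zs k) - gw (zs (k + 1)), zt (k + 1) - x⟫ := by
    rw [← h.lam_smul_hpeResidual, real_inner_smul_left, ← mul_neg]
    refine mul_le_mul_of_nonneg_left ?_ (h.lam_succ_pos k).le
    simpa only [sub_zero] using h.hpeResidual_mem k x 0 hx
  linarith [h.breg_succ_add_lam_mul_eps_le k,
    breg_sub_breg w gw (zs k) (zs (k + 1)) x (zt (k + 1))]

theorem antitone_breg (h : NEHPE Z w gw T σ lam zs zt ε)
    (hbreg : ∀ z ∈ Z, ∀ z' ∈ Z, 0 ≤ breg w gw z z') (hσ : σ ≤ 1) {x : E} (hx : 0 ∈ T x) :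
    Antitone fun k => breg w gw (zs k) x := by
  refine antitone_nat_of_succ_le fun k => le_trans ?_ (h.breg_succ_add_le hx k)
  exact le_add_of_nonneg_left (mul_nonneg (sub_nonneg.2 hσ)
    (hbreg _ (h.zs_mem k) _ (h.zt_succ_mem k)))

theorem summable_breg (h : NEHPE Z w gw T σ lam zs zt ε)
    (hbreg : ∀ z ∈ Z, ∀ z' ∈ Z, 0 ≤ breg w gw z z') (hσ : σ < 1) {x : E} (hx : 0 ∈ T x)
    (hxZ : x ∈ Z) : Summable fun k => breg w gw (zs k) (zt (k + 1)) := by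
  refine summable_of_sum_range_le (c := breg w gw (zs 0) x / (1 - σ))
    (fun k => hbreg _ (h.zs_mem k) _ (h.zt_succ_mem k)) fun n => ?_
  rw [le_div_iff₀' (sub_pos.2 hσ), Finset.mul_sum]
  calc ∑ k ∈ Finset.range n, (1 - σ) * breg w gw (zs k) (zt (k + 1))
      ≤ ∑ k ∈ Finset.range n, (breg w gw (zs k) x - breg w gw (zs (k + 1)) x) :=
        Finset.sum_le_sum fun k _ => le_sub_right_of_add_le (h.breg_succ_add_le hx k)
    _ = breg w gw (zs 0) x - breg w gw (zs n) x := Finset.sum_range_sub' _ n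
    _ ≤ breg w gw (zs 0) x := sub_le_self _ (hbreg _ (h.zs_mem n) _ hxZ)

theorem summable_breg_succ (h : NEHPE Z w gw T σ lam zs zt ε)
    (hbreg : ∀ z ∈ Z, ∀ z' ∈ Z, 0 ≤ breg w gw z z')
    (hsum : Summable fun k => breg w gw (zs k) (zt (k + 1))) :
    Summable fun k => breg w gw (zs (k + 1)) (zt (k + 1)) :=
  .of_nonneg_of_le (fun k => hbreg _ (h.zs_mem _) _ (h.zt_succ_mem k))
    (fun k => le_of_add_le_of_nonneg_left (h.breg_succ_add_lam_mul_eps_le k)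
      (h.lam_mul_eps_nonneg k)) (hsum.mul_left σ)

theorem summable_lam_mul_eps (h : NEHPE Z w gw T σ lam zs zt ε)
    (hbreg : ∀ z ∈ Z, ∀ z' ∈ Z, 0 ≤ breg w gw z z')
    (hsum : Summable fun k => breg w gw (zs k) (zt (k + 1))) :
    Summable fun k => lam (k + 1) * ε (k + 1) :=
  .of_nonneg_of_le h.lam_mul_eps_nonneg
    (fun k => le_of_add_le_of_nonneg_right (h.breg_succ_add_lam_mul_eps_le k)
      (hbreg _ (h.zs_mem _) _ (h.zt_succ_mem k))) (hsum.mul_left σ)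

end Convex

section StronglyConvex

variable {E : Type*} [NormedAddCommGroup E] [InnerProductSpace ℝ E] [FiniteDimensional ℝ E]
  {Z : Set E} {p : Seminorm ℝ E} {m M : ℝ} {w : E → ℝ} {gw : E → E} {T : E → Set E} {σ : ℝ}
  {lam : ℕ → ℝ} {zs zt : ℕ → E} {ε : ℕ → ℝ}

theorem summable_sq_norm_sub_succ (h : NEHPE Z w gw T σ lam zs zt ε) (hw : IsDGF Z p m M w gw)
    (hm : 0 < m) (hsum : Summable fun k => breg w gw (zs k) (zt (k + 1))) :
    Summable fun k => ‖gw (zs k) - gw (zs (k + 1))‖ ^ 2 := by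
  have hprev := hw.summable_sq_seminorm_sub hm h.zs_mem h.zt_succ_mem hsum
  have hnext := hw.summable_sq_seminorm_sub hm (fun _ => h.zs_mem _) h.zt_succ_mem
    (h.summable_breg_succ (hw.breg_nonneg hm.le) hsum)
  obtain ⟨K, hK⟩ := hw.exists_norm_sub_le
  refine .of_nonneg_of_le (fun k => sq_nonneg _) (fun k => ?_)
    ((hprev.add hnext).mul_left (K ^ 2 * 2))
  have htri : p (zs k - zs (k + 1)) ≤ p (zs k - zt (k + 1)) + p (zs (k + 1) - zt (k + 1)) := by
    rw [map_sub_rev p (zs (k + 1))]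
    exact le_map_sub_add_map_sub p _ _ _
  calc ‖gw (zs k) - gw (zs (k + 1))‖ ^ 2
      ≤ (K * p (zs k - zs (k + 1))) ^ 2 := by gcongr; exact hK _ (h.zs_mem _) _ (h.zs_mem _)
    _ = K ^ 2 * p (zs k - zs (k + 1)) ^ 2 := mul_pow _ _ _
    _ ≤ K ^ 2 * (p (zs k - zt (k + 1)) + p (zs (k + 1) - zt (k + 1))) ^ 2 := by gcongr
    _ ≤ K ^ 2 * (2 * (p (zs k - zt (k + 1)) ^ 2 + p (zs (k + 1) - zt (k + 1)) ^ 2)) := by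
        gcongr
        exact add_sq_le
    _ = K ^ 2 * 2 * (p (zs k - zt (k + 1)) ^ 2 + p (zs (k + 1) - zt (k + 1)) ^ 2) :=
        (mul_assoc _ _ _).symm

theorem summable_sq_lam_mul (h : NEHPE Z w gw T σ lam zs zt ε) (hw : IsDGF Z p m M w gw)
    (hm : 0 < m) (hsum : Summable fun k => breg w gw (zs k) (zt (k + 1))) :
    Summable fun k => lam (k + 1) ^ 2 * (‖hpeResidual gw lam zs k‖ ^ 2 + ε (k + 1) ^ 2) := by
  refine ((h.summable_sq_norm_sub_succ hw hm hsum).add (summable_sq_of_summable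
    (h.summable_lam_mul_eps (hw.breg_nonneg hm.le) hsum))).congr fun k => ?_
  rw [← h.lam_smul_hpeResidual, norm_smul, mul_pow, mul_pow, Real.norm_eq_abs, sq_abs, mul_add]

theorem exists_subseq_hpeResidual_eps_tendsto_zero (h : NEHPE Z w gw T σ lam zs zt ε)
    (hw : IsDGF Z p m M w gw) (hm : 0 < m)
    (hsum : Summable fun k => breg w gw (zs k) (zt (k + 1)))
    (hlam : ¬ Summable fun k => lam (k + 1) ^ 2) :
    ∃ φ : ℕ → ℕ, StrictMono φ ∧ Tendsto (fun n => hpeResidual gw lam zs (φ n)) atTop (nhds 0) ∧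
      Tendsto (fun n => ε (φ n + 1)) atTop (nhds 0) := by
  obtain ⟨φ, hφ, hlim⟩ := exists_strictMono_tendsto_zero_of_summable_mul
    (fun k => sq_nonneg (lam (k + 1))) (fun k => by positivity) (h.summable_sq_lam_mul hw hm hsum)
    hlam
  have hsqrt : Tendsto (fun n => √(‖hpeResidual gw lam zs (φ n)‖ ^ 2 + ε (φ n + 1) ^ 2)) atTop
      (nhds 0) := by
    simpa only [Real.sqrt_zero] using hlim.sqrt
  refine ⟨φ, hφ, squeeze_zero_norm (fun n => ?_) hsqrt, squeeze_zero_norm (fun n => ?_) hsqrt⟩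
  · exact Real.le_sqrt_of_sq_le (le_add_of_nonneg_right (sq_nonneg _))
  · exact Real.abs_le_sqrt (le_add_of_nonneg_left (sq_nonneg _))

theorem tendsto_seminorm_sub (h : NEHPE Z w gw T σ lam zs zt ε) (hw : IsDGF Z p m M w gw)
    (hm : 0 < m) (hsum : Summable fun k => breg w gw (zs k) (zt (k + 1))) :
    Tendsto (fun k => p (zs (k + 1) - zt (k + 1))) atTop (nhds 0) :=
  (hw.tendsto_breg_zero_iff hm (fun _ => h.zs_mem _) h.zt_succ_mem).1
    (h.summable_breg_succ (hw.breg_nonneg hm.le) hsum).tendsto_atTop_zero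

theorem tendsto_breg_zs_of_subseq (h : NEHPE Z w gw T σ lam zs zt ε) (hw : IsDGF Z p m M w gw)
    (hm : 0 < m) (hσ : σ ≤ 1) (hsum : Summable fun k => breg w gw (zs k) (zt (k + 1))) {x : E}
    (hx : 0 ∈ T x) (hxZ : x ∈ Z) {θ : ℕ → ℕ} (hθ : Tendsto θ atTop atTop)
    (hlim : Tendsto (fun n => zt (θ n + 1)) atTop (nhds x)) :
    Tendsto (fun k => breg w gw (zs k) x) atTop (nhds 0) := by
  have hzt : Tendsto (fun n => p (zt (θ n + 1) - x)) atTop (nhds 0) := by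
    simpa only [Function.comp_def, sub_self, map_zero] using
      (p.convexOn.locallyLipschitz.continuous.tendsto (x - x)).comp (hlim.sub_const x)
  have hzs : Tendsto (fun n => p (zs (θ n + 1) - x)) atTop (nhds 0) :=
    tendsto_seminorm_sub_trans ((h.tendsto_seminorm_sub hw hm hsum).comp hθ) hzt
  exact (tendsto_iff_tendsto_subseq_of_antitone (h.antitone_breg (hw.breg_nonneg hm.le) hσ hx)
    ((tendsto_add_atTop_nat 1).comp hθ)).2
      ((hw.tendsto_breg_zero_iff hm (fun _ => h.zs_mem _) fun _ => hxZ).2 hzs)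

theorem tendsto_breg_zt (h : NEHPE Z w gw T σ lam zs zt ε) (hw : IsDGF Z p m M w gw)
    (hm : 0 < m) (hsum : Summable fun k => breg w gw (zs k) (zt (k + 1))) {x : E} (hxZ : x ∈ Z)
    (hlim : Tendsto (fun k => breg w gw (zs k) x) atTop (nhds 0)) :
    Tendsto (fun k => breg w gw (zt k) x) atTop (nhds 0) := by
  have hgap : Tendsto (fun k => p (zt (k + 1) - zs (k + 1))) atTop (nhds 0) := by
    simpa only [map_sub_rev p] using h.tendsto_seminorm_sub hw hm hsum
  have hzs := (hw.tendsto_breg_zero_iff hm h.zs_mem fun _ => hxZ).1 hlim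
  rw [← tendsto_add_atTop_iff_nat 1, hw.tendsto_breg_zero_iff hm h.zt_succ_mem fun _ => hxZ]
  exact tendsto_seminorm_sub_trans hgap ((tendsto_add_atTop_iff_nat 1).2 hzs)

end StronglyConvex

end NEHPE

/-- If σ < 1, Σ λ_k² = ∞ and {z̃_k} is bounded, then there is a
solution z̃ ∈ Z of the inclusion with (dw)_{z_k}(z̃) → 0 and (dw)_{z̃_k}(z̃) → 0. -/
theorem stmt10
    {E : Type*} [NormedAddCommGroup E] [InnerProductSpace ℝ E] [FiniteDimensional ℝ E]
    (Z : Set E) (p : Seminorm ℝ E) (m M : ℝ) (hm : 0 < m) (hmM : m ≤ M)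
    (w : E → ℝ) (gw : E → E) (hw : IsDGF Z p m M w gw)
    (T : E → Set E) (hT : MaxMonoOp T)
    (hdom : ∀ z, (T z).Nonempty → z ∈ Z) (hsol : ∃ z, 0 ∈ T z)
    (σ : ℝ) (hσ0 : 0 ≤ σ) (hσ1 : σ ≤ 1)
    (lam : ℕ → ℝ) (zs zt : ℕ → E) (ε : ℕ → ℝ)
    (hseq : NEHPE Z w gw T σ lam zs zt ε)
    (r : ℕ → E) (hr : ∀ k, r k = (1 / lam k) • (gw (zs (k - 1)) - gw (zs k)))
    (hσlt : σ < 1)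
    (hlamsq : Tendsto (fun n : ℕ => ∑ k ∈ Finset.Icc 1 n, lam k ^ 2) atTop atTop)
    (hbdd : Bornology.IsBounded (Set.range zt)) :
    ∃ ztil : E, (0 : E) ∈ T ztil ∧ ztil ∈ Z
      ∧ Tendsto (fun k => breg w gw (zs k) ztil) atTop (nhds 0)
      ∧ Tendsto (fun k => breg w gw (zt k) ztil) atTop (nhds 0) := by
  obtain ⟨z, hz⟩ := hsol
  have hsum : Summable fun k => breg w gw (zs k) (zt (k + 1)) :=
    hseq.summable_breg (hw.breg_nonneg hm.le) hσlt hz (hdom z ⟨0, hz⟩)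
  obtain ⟨φ, hφ, hres, hε⟩ := hseq.exists_subseq_hpeResidual_eps_tendsto_zero hw hm hsum
    (not_summable_succ_of_tendsto_sum_Icc_atTop hlamsq)
  obtain ⟨x, -, ψ, hψ, hlim⟩ :=
    tendsto_subseq_of_bounded hbdd fun n => Set.mem_range_self (φ n + 1)
  have hx : 0 ∈ T x := hT.epsEnl_zero_subset x (mem_epsEnl_of_tendsto
    (hε.comp hψ.tendsto_atTop) hlim (hres.comp hψ.tendsto_atTop) fun n => hseq.hpeResidual_mem _)
  have hxZ : x ∈ Z := hdom x ⟨0, hx⟩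
  have hzs : Tendsto (fun k => breg w gw (zs k) x) atTop (nhds 0) :=
    hseq.tendsto_breg_zs_of_subseq hw hm hσ1 hsum hx hxZ (hφ.comp hψ).tendsto_atTop hlim
  exact ⟨x, hx, hxZ, hzs, hseq.tendsto_breg_zt hw hm hsum hxZ hzs⟩
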